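/- arXiv:0901.3304 — 6 statements merged into one kernel-verified Lean document; each statement's English description precedes it below -/
import Mathlib

section
/- The probability that the algebraic difference C_2 − C_1 = {y − x : x ∈ C_1, y ∈ C_2} contains a nonempty open interval equals 0 or 1. -/
open MeasureTheory ProbabilityTheory

/-- Words over the alphabet `{1,2}` (represented as `Fin 2`), indexing the nodes of the
binary tree of the construction.  A word `i :: w` is a child of the word `w`. -/
abbrev LarssonWord := List (Fin 2)

/-- The left endpoint of the level-`w.length` interval of Larsson's random Cantor set
indexed by the word `w`, given the family `u` of (realized) uniform random variables.
The level-0 interval is `[0,1]`; if `I_w = [α, α + a^n]` is a level-`n` interval, its two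
level-`(n+1)` subintervals are `[α + a^n (b + U), α + a^n (b + U) + a^(n+1)]` and
`[α + a^n (1/2 + a/2 + U'), α + a^n (1/2 + a/2 + U') + a^(n+1)]`. -/
noncomputable def larssonLeft (a b : ℝ) (u : LarssonWord → ℝ) : LarssonWord → ℝ
  | [] => 0
  | (i :: w) => larssonLeft a b u w +
      a ^ w.length * ((if i = 0 then b else 1 / 2 + a / 2) + u (i :: w))

/-- `C^n`: the union of the `2^n` level-`n` intervals. -/
noncomputable def larssonLevel (a b : ℝ) (u : LarssonWord → ℝ) (n : ℕ) : Set ℝ :=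
  ⋃ w ∈ {w : LarssonWord | w.length = n},
    Set.Icc (larssonLeft a b u w) (larssonLeft a b u w + a ^ n)

/-- Larsson's random Cantor set `C = ⋂ n, C^n`. -/
noncomputable def larssonCantor (a b : ℝ) (u : LarssonWord → ℝ) : Set ℝ :=
  ⋂ n : ℕ, larssonLevel a b u n

/-
For each letter `i`, the Cantor sets built from the subtrees below `i` embed in `C₁` and `C₂` by
affine maps of the same ratio `a`, so `C₂ - C₁` contains an affine copy of their difference set.
Hence failing to contain an interval is inherited by the subtrees below both letters. These are
independent and distributed like the whole tree, so the probability `p` of the failure satisfies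
`p ≤ p * p`, whence `p = 0` or `p = 1`.
-/

open scoped Pointwise ENNReal

/-! ### Inherited properties of i.i.d. labels on a tree -/

section Tree

variable {ι κ E Ω : Type*} [MeasurableSpace E] [MeasurableSpace Ω] {P : Measure Ω}

/-- The labelling of the subtree rooted at the one-letter word `[i]`. Words are read from right to
left, as in `LarssonWord`, so the words starting with the letter `i` are those ending in `[i]`. -/
def subtree (i : ι) (x : List ι → E) : List ι → E :=
  fun w => x (w ++ [i])

theorem iIndepFun_curry {X : ι → κ → Ω → E} (hX : ∀ i j, Measurable (X i j))
    (hindep : iIndepFun (fun p : ι × κ => X p.1 p.2) P) :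
    iIndepFun (fun i ω j => X i j ω) P := by
  have := hindep.isProbabilityMeasure
  have hlaw (i : ι) (j : κ) : IsProbabilityMeasure (P.map (X i j)) :=
    Measure.isProbabilityMeasure_map (hX i j).aemeasurable
  have hrow (i : ι) : P.map (fun ω j => X i j ω) = Measure.infinitePi fun j => P.map (X i j) :=
    (hindep.precomp (Prod.mk_right_injective i)).map_fun_eq_infinitePi_map (hX i)
  have hjoint : P.map (fun ω (p : ι × κ) => X p.1 p.2 ω) =
      Measure.infinitePi fun p : ι × κ => P.map (X p.1 p.2) :=
    hindep.map_fun_eq_infinitePi_map fun p => hX p.1 p.2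
  rw [iIndepFun_iff_map_fun_eq_infinitePi_map (by fun_prop)]
  calc P.map (fun ω i j => X i j ω)
      = (P.map fun ω (p : ι × κ) => X p.1 p.2 ω).map (MeasurableEquiv.curry ι κ E) := by
        rw [Measure.map_map (by fun_prop) (by fun_prop)]
        rfl
    _ = Measure.infinitePi fun i => P.map (fun ω j => X i j ω) := by
        simp only [hjoint, hrow]
        exact Measure.infinitePi_map_curry fun i j => P.map (X i j)

variable {X : List ι → Ω → E}

theorem iIndepFun_subtree (hX : ∀ w, Measurable (X w)) (hindep : iIndepFun X P) :
    iIndepFun (fun i ω => subtree i (X · ω)) P := by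
  have hinj : Function.Injective fun p : ι × List ι => p.2 ++ [p.1] := by
    rintro ⟨i, v⟩ ⟨j, w⟩ h
    simpa [and_comm] using h
  exact iIndepFun_curry (fun i w => hX (w ++ [i])) (hindep.precomp hinj)

theorem identDistrib_subtree [Countable ι] (hident : ∀ v w, IdentDistrib (X v) (X w) P P)
    (hindep : iIndepFun X P) (i : ι) :
    IdentDistrib (fun ω => subtree i (X · ω)) (fun ω => (X · ω)) P P :=
  IdentDistrib.pi (fun w => hident (w ++ [i]) w)
    (hindep.precomp (List.append_left_injective [i])) hindep

theorem eq_zero_or_eq_one_of_le_mul_self {p : ℝ≥0∞} (hp : p ≤ 1) (h : p ≤ p * p) :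
    p = 0 ∨ p = 1 := by
  by_contra! hne
  have hlt : p * p < p * 1 :=
    ENNReal.mul_lt_mul_right hne.1 (ne_top_of_le_ne_top ENNReal.one_ne_top hp) (hp.lt_of_ne hne.2)
  exact (h.trans_lt (hlt.trans_eq (mul_one p))).false

theorem measure_eq_zero_or_one_of_inherited [Countable ι] [Nontrivial ι]
    (hX : ∀ w, Measurable (X w)) (hident : ∀ v w, IdentDistrib (X v) (X w) P P)
    (hindep : iIndepFun X P) {H : Set (List ι → E)} (hH : MeasurableSet H)
    (hinherit : ∀ i, ∀ᵐ ω ∂P, (X · ω) ∈ H → subtree i (X · ω) ∈ H) :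
    P {ω | (X · ω) ∈ H} = 0 ∨ P {ω | (X · ω) ∈ H} = 1 := by
  have := hindep.isProbabilityMeasure
  have hlaw (i : ι) : P {ω | subtree i (X · ω) ∈ H} = P {ω | (X · ω) ∈ H} :=
    (identDistrib_subtree hident hindep i).measure_mem_eq hH
  obtain ⟨i, j, hij⟩ := exists_pair_ne ι
  refine eq_zero_or_eq_one_of_le_mul_self prob_le_one ?_
  calc P {ω | (X · ω) ∈ H}
      ≤ P ({ω | subtree i (X · ω) ∈ H} ∩ {ω | subtree j (X · ω) ∈ H}) := by
        refine measure_mono_ae ?_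
        filter_upwards [hinherit i, hinherit j] with ω hi hj h using ⟨hi h, hj h⟩
    _ = P {ω | subtree i (X · ω) ∈ H} * P {ω | subtree j (X · ω) ∈ H} :=
        ((iIndepFun_subtree hX hindep).indepFun hij).measure_inter_preimage_eq_mul _ _ hH hH
    _ = P {ω | (X · ω) ∈ H} * P {ω | (X · ω) ∈ H} := by rw [hlaw, hlaw]

end Tree

/-! ### Random sets with closed graph -/

section RandomSet

variable {α E : Type*} [TopologicalSpace α] [TopologicalSpace E]

theorem isClosed_setOf_mem_sub [AddGroup E] [ContinuousAdd E] {S T : α → Set E} {K : Set E}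
    (hK : IsCompact K) (hTK : ∀ u, T u ⊆ K) (hS : IsClosed {p : α × E | p.2 ∈ S p.1})
    (hT : IsClosed {p : α × E | p.2 ∈ T p.1}) (d : E) : IsClosed {u | d ∈ S u - T u} := by
  have := isCompact_iff_compactSpace.1 hK
  let Z : Set (α × K) := {z | d + (z.2 : E) ∈ S z.1 ∧ (z.2 : E) ∈ T z.1}
  have hZ : IsClosed Z :=
    (hS.preimage (f := fun z : α × K => (z.1, d + (z.2 : E))) (by fun_prop)).inter
      (hT.preimage (f := fun z : α × K => (z.1, (z.2 : E))) (by fun_prop))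
  convert isClosedMap_fst_of_compactSpace Z hZ
  ext u
  constructor
  · rintro ⟨q, hq, p, hp, rfl⟩
    exact ⟨(u, ⟨p, hTK u hp⟩), ⟨by simpa using hq, hp⟩, rfl⟩
  · rintro ⟨⟨u, p⟩, ⟨hq, hp⟩, rfl⟩
    exact ⟨d + p, hq, p, hp, add_sub_cancel_right d (p : E)⟩

theorem measurableSet_setOf_nonempty_interior [MeasurableSpace α] [OpensMeasurableSpace α]
    [SecondCountableTopology E] {S : α → Set E} (hS : ∀ d, IsClosed {u | d ∈ S u}) :
    MeasurableSet {u | (interior (S u)).Nonempty} := by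
  have hbasis : {u | (interior (S u)).Nonempty} =
      ⋃ B ∈ TopologicalSpace.countableBasis E, ⋂ d ∈ B, {u | d ∈ S u} := by
    ext u
    simp only [Set.mem_ofPred_eq, Set.mem_iUnion₂, Set.mem_iInter₂]
    constructor
    · rintro ⟨d, hd⟩
      obtain ⟨B, hB, -, hBS⟩ :=
        (TopologicalSpace.isBasis_countableBasis E).exists_subset_of_mem_open
          hd isOpen_interior
      exact ⟨B, hB, fun e he => interior_subset (hBS he)⟩
    · rintro ⟨B, hB, hBS⟩
      exact (TopologicalSpace.nonempty_of_mem_countableBasis hB).mono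
        (interior_maximal hBS (TopologicalSpace.isOpen_of_mem_countableBasis hB))
  rw [hbasis]
  exact .biUnion (TopologicalSpace.countable_countableBasis E) fun B _ =>
    (isClosed_biInter fun d _ => hS d).measurableSet

end RandomSet

theorem nonempty_interior_iff_exists_Ioo_subset {α : Type*} [TopologicalSpace α] [LinearOrder α]
    [OrderTopology α] [DenselyOrdered α] [Nontrivial α] {s : Set α} :
    (interior s).Nonempty ↔ ∃ x y, x < y ∧ Set.Ioo x y ⊆ s := by
  constructor
  · intro h
    obtain ⟨x, y, hxy, hs⟩ := isOpen_interior.exists_Ioo_subset h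
    exact ⟨x, y, hxy, hs.trans interior_subset⟩
  · rintro ⟨x, y, hxy, hs⟩
    exact (Set.nonempty_Ioo.2 hxy).mono (interior_maximal hs isOpen_Ioo)

theorem ae_mem_of_map_eq_smul_restrict {Ω E : Type*} [MeasurableSpace Ω] [MeasurableSpace E]
    {P : Measure Ω} {μ : Measure E} {X : Ω → E} {c : ℝ≥0∞} {s : Set E} (hX : AEMeasurable X P)
    (hs : MeasurableSet s) (hlaw : P.map X = c • μ.restrict s) : ∀ᵐ ω ∂P, X ω ∈ s := by
  refine ae_of_ae_map hX ?_
  rw [hlaw]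
  exact Measure.ae_smul_measure (ae_restrict_mem hs) c

/-! ### Larsson's Cantor set -/

section Larsson

variable {a b : ℝ} {u : LarssonWord → ℝ}

theorem mem_larssonLevel {n : ℕ} {x : ℝ} :
    x ∈ larssonLevel a b u n ↔
      ∃ w, w.length = n ∧ x ∈ Set.Icc (larssonLeft a b u w) (larssonLeft a b u w + a ^ n) := by
  simp only [larssonLevel, Set.mem_iUnion, Set.mem_ofPred_eq, exists_prop]

theorem larssonLevel_zero : larssonLevel a b u 0 = Set.Icc 0 1 := by
  simp [larssonLevel, larssonLeft]

theorem larssonCantor_subset_Icc : larssonCantor a b u ⊆ Set.Icc 0 1 :=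
  (Set.iInter_subset _ 0).trans larssonLevel_zero.subset

theorem continuous_larssonLeft (a b : ℝ) (w : LarssonWord) :
    Continuous fun u : LarssonWord → ℝ => larssonLeft a b u w := by
  induction w with
  | nil => exact continuous_const
  | cons i w ih =>
    simp only [larssonLeft]
    fun_prop

theorem isClosed_setOf_mem_larssonCantor (a b : ℝ) :
    IsClosed {p : (LarssonWord → ℝ) × ℝ | p.2 ∈ larssonCantor a b p.1} := by
  simp only [larssonCantor, larssonLevel, Set.mem_iInter, Set.mem_iUnion₂, Set.ofPred_forall,
    Set.ofPred_exists]
  refine isClosed_iInter fun n =>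
    (List.finite_length_eq (Fin 2) n).isClosed_biUnion fun w _ => ?_
  have hleft := (continuous_larssonLeft a b w).comp
    (continuous_fst : Continuous (Prod.fst : (LarssonWord → ℝ) × ℝ → _))
  exact (isClosed_le hleft continuous_snd).inter
    (isClosed_le continuous_snd (hleft.add continuous_const))

theorem larssonLeft_append_singleton (w : LarssonWord) (i : Fin 2) :
    larssonLeft a b u (w ++ [i]) =
      larssonLeft a b u [i] + a * larssonLeft a b (subtree i u) w := by
  induction w with
  | nil => simp [larssonLeft]
  | cons j w ih =>
    simp only [List.cons_append, larssonLeft.eq_2 _ _ _ j, ih, subtree, List.length_append,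
      List.length_singleton]
    ring

theorem add_mul_mem_larssonLevel_succ (ha : 0 ≤ a) {n : ℕ} {i : Fin 2} {x : ℝ}
    (hx : x ∈ larssonLevel a b (subtree i u) n) :
    larssonLeft a b u [i] + a * x ∈ larssonLevel a b u (n + 1) := by
  obtain ⟨w, hw, hle, hge⟩ := mem_larssonLevel.1 hx
  refine mem_larssonLevel.2 ⟨w ++ [i], by simp [hw], ?_, ?_⟩ <;>
    rw [larssonLeft_append_singleton]
  · gcongr
  · calc larssonLeft a b u [i] + a * x
        ≤ larssonLeft a b u [i] + a * (larssonLeft a b (subtree i u) w + a ^ n) := by gcongr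
      _ = larssonLeft a b u [i] + a * larssonLeft a b (subtree i u) w + a ^ (n + 1) := by ring

theorem add_mul_mem_larssonCantor (ha : 0 ≤ a) {i : Fin 2}
    (hi : larssonLeft a b u [i] ∈ Set.Icc 0 (1 - a)) {x : ℝ}
    (hx : x ∈ larssonCantor a b (subtree i u)) :
    larssonLeft a b u [i] + a * x ∈ larssonCantor a b u := by
  refine Set.mem_iInter.2 fun n => ?_
  cases n with
  | zero =>
    rw [larssonLevel_zero]
    obtain ⟨hx0, hx1⟩ := larssonCantor_subset_Icc hx
    exact ⟨add_nonneg hi.1 (mul_nonneg ha hx0), by linarith [hi.2, mul_le_of_le_one_right ha hx1]⟩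
  | succ n => exact add_mul_mem_larssonLevel_succ ha (Set.mem_iInter.1 hx n)

theorem larssonLeft_singleton_mem_Icc (u : LarssonWord → ℝ) (ha : 0 ≤ a) (hb : 0 ≤ b) {i : Fin 2}
    (hu : u [i] ∈ Set.Icc 0 ((1 - 3 * a - 2 * b) / 2)) :
    larssonLeft a b u [i] ∈ Set.Icc 0 (1 - a) := by
  obtain ⟨hu0, hu1⟩ := hu
  simp only [larssonLeft, List.length_nil, pow_zero, one_mul, zero_add]
  split_ifs <;> constructor <;> linarith

/-- The difference set `C₂ - C₁`, as a function of the labels of both constructions: the word `w`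
carries the pair of its labels in `C₁` (at `false`) and in `C₂` (at `true`). -/
def larssonDifference (a b : ℝ) (x : LarssonWord → Bool → ℝ) : Set ℝ :=
  {d | ∃ p ∈ larssonCantor a b (x · false), ∃ q ∈ larssonCantor a b (x · true), d = q - p}

theorem larssonDifference_eq_sub (x : LarssonWord → Bool → ℝ) :
    larssonDifference a b x = larssonCantor a b (x · true) - larssonCantor a b (x · false) :=
  Set.ext fun _ => ⟨fun ⟨p, hp, q, hq, h⟩ => ⟨q, hq, p, hp, h.symm⟩,
    fun ⟨q, hq, p, hp, h⟩ => ⟨p, hp, q, hq, h.symm⟩⟩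

theorem isClosed_setOf_mem_larssonDifference (a b d : ℝ) :
    IsClosed {x | d ∈ larssonDifference a b x} := by
  have hgraph (c : Bool) :
      IsClosed {p : (LarssonWord → Bool → ℝ) × ℝ | p.2 ∈ larssonCantor a b (p.1 · c)} :=
    (isClosed_setOf_mem_larssonCantor a b).preimage
      (f := fun p : (LarssonWord → Bool → ℝ) × ℝ => ((p.1 · c), p.2)) (by fun_prop)
  simp only [larssonDifference_eq_sub]
  have hbounded (x : LarssonWord → Bool → ℝ) : larssonCantor a b (x · false) ⊆ Set.Icc 0 1 :=
    larssonCantor_subset_Icc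
  exact isClosed_setOf_mem_sub isCompact_Icc hbounded (hgraph true) (hgraph false) d

theorem nonempty_interior_larssonDifference_of_subtree (ha : 0 < a) {x : LarssonWord → Bool → ℝ}
    {i : Fin 2} (hi : ∀ c, larssonLeft a b (x · c) [i] ∈ Set.Icc 0 (1 - a))
    (h : (interior (larssonDifference a b (subtree i x))).Nonempty) :
    (interior (larssonDifference a b x)).Nonempty := by
  set s := larssonLeft a b (x · true) [i] - larssonLeft a b (x · false) [i] with hs
  have hopen : IsOpenMap fun d : ℝ => s + a * d :=
    (isOpenMap_add_left s).comp (isOpenMap_smul₀ ha.ne')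
  have hmaps : Set.MapsTo (fun d => s + a * d) (larssonDifference a b (subtree i x))
      (larssonDifference a b x) := by
    rintro _ ⟨p, hp, q, hq, rfl⟩
    refine ⟨_, add_mul_mem_larssonCantor ha.le (hi false) hp,
      _, add_mul_mem_larssonCantor ha.le (hi true) hq, ?_⟩
    simp only [hs]
    ring
  exact (h.image _).mono (hopen.mapsTo_interior hmaps).image_subset

end Larsson

theorem larsson_difference_zero_one_law_general
    {a b : ℝ} (ha : 0 < a) {Ω : Type*} [MeasurableSpace Ω] {P : Measure Ω}
    {U : Bool × LarssonWord → Ω → ℝ} (hUmeas : ∀ p, Measurable (U p))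
    (hUident : ∀ v w, IdentDistrib (fun ω c => U (c, v) ω) (fun ω c => U (c, w) ω) P P)
    (hUindep : iIndepFun (fun w ω c => U (c, w) ω) P)
    (hUnested : ∀ c i, ∀ᵐ ω ∂P, larssonLeft a b (fun w => U (c, w) ω) [i] ∈ Set.Icc 0 (1 - a)) :
    P {ω | ∃ x y : ℝ, x < y ∧ Set.Ioo x y ⊆
      {d : ℝ | ∃ p ∈ larssonCantor a b (fun w => U (false, w) ω),
               ∃ q ∈ larssonCantor a b (fun w => U (true, w) ω), d = q - p}} = 0 ∨
    P {ω | ∃ x y : ℝ, x < y ∧ Set.Ioo x y ⊆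
      {d : ℝ | ∃ p ∈ larssonCantor a b (fun w => U (false, w) ω),
               ∃ q ∈ larssonCantor a b (fun w => U (true, w) ω), d = q - p}} = 1 := by
  have := hUindep.isProbabilityMeasure
  let X : LarssonWord → Ω → Bool → ℝ := fun w ω c => U (c, w) ω
  let G : Set (LarssonWord → Bool → ℝ) := {x | (interior (larssonDifference a b x)).Nonempty}
  have hX (w : LarssonWord) : Measurable (X w) := by fun_prop
  have hG : MeasurableSet G :=
    measurableSet_setOf_nonempty_interior (isClosed_setOf_mem_larssonDifference a b)
  have hinherit (i : Fin 2) : ∀ᵐ ω ∂P, (X · ω) ∈ Gᶜ → subtree i (X · ω) ∈ Gᶜ := by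
    filter_upwards [ae_all_iff.2 (hUnested · i)] with ω hω
    exact mt (nonempty_interior_larssonDifference_of_subtree ha hω)
  have hcompl := measure_eq_zero_or_one_of_inherited hX hUident hUindep hG.compl hinherit
  have hGX : MeasurableSet {ω | (X · ω) ∈ G} := measurable_pi_lambda _ hX hG
  simp only [← nonempty_interior_iff_exists_Ioo_subset]
  exact (hcompl.imp (prob_compl_eq_zero_iff hGX).1 (prob_compl_eq_one_iff hGX).1).symm

/-- The probability that the algebraic difference `C₂ − C₁` of two independent copies of
Larsson's random Cantor set contains a nonempty open interval equals 0 or 1. -/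
theorem larsson_difference_zero_one_law
    (a b : ℝ) (ha : 1 / 4 < a) (hb : 0 < b) (hab : 3 * a + 2 * b < 1)
    {Ω : Type*} [MeasurableSpace Ω] (P : Measure Ω) [IsProbabilityMeasure P]
    (U : Bool × LarssonWord → Ω → ℝ)
    (hUmeas : ∀ p, Measurable (U p))
    (hUlaw : ∀ p, P.map (U p) =
      (ENNReal.ofReal ((1 - 3 * a - 2 * b) / 2))⁻¹ •
        volume.restrict (Set.Icc 0 ((1 - 3 * a - 2 * b) / 2)))
    (hUindep : iIndepFun U P) :
    P {ω | ∃ x y : ℝ, x < y ∧ Set.Ioo x y ⊆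
      {d : ℝ | ∃ p ∈ larssonCantor a b (fun w => U (false, w) ω),
               ∃ q ∈ larssonCantor a b (fun w => U (true, w) ω), d = q - p}} = 0 ∨
    P {ω | ∃ x y : ℝ, x < y ∧ Set.Ioo x y ⊆
      {d : ℝ | ∃ p ∈ larssonCantor a b (fun w => U (false, w) ω),
               ∃ q ∈ larssonCantor a b (fun w => U (true, w) ω), d = q - p}} = 1 := by
  have ha0 : 0 < a := by linarith
  have hident (v w : LarssonWord) (c : Bool) : IdentDistrib (U (c, v)) (U (c, w)) P P :=
    ⟨(hUmeas _).aemeasurable, (hUmeas _).aemeasurable, by rw [hUlaw, hUlaw]⟩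
  have hcopies (w : LarssonWord) : iIndepFun (fun c => U (c, w)) P :=
    hUindep.precomp (Prod.mk_left_injective w)
  have hrange (p : Bool × LarssonWord) :
      ∀ᵐ ω ∂P, U p ω ∈ Set.Icc 0 ((1 - 3 * a - 2 * b) / 2) :=
    ae_mem_of_map_eq_smul_restrict (hUmeas p).aemeasurable measurableSet_Icc (hUlaw p)
  exact larsson_difference_zero_one_law_general ha0 hUmeas
    (fun v w => IdentDistrib.pi (hident v w) (hcopies v) (hcopies w))
    (iIndepFun_curry (fun w c => hUmeas (c, w)) (hUindep.precomp Prod.swap_injective))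
    (fun c i => (hrange (c, [i])).mono fun ω =>
      larssonLeft_singleton_mem_Icc (fun w => U (c, w) ω) ha0.le hb.le)
end

section
/- Let x ∈ [−1,1] and U_1, U_2, U_3, U_4 ∈ [0, t], and define y_1 = (x − 1/2 − a/2 + b + U_1 − U_4)/a, y_2 = (x + U_2 − U_4)/a, y_3 = (x + 1/2 + a/2 − b + U_2 − U_3)/a, y_4 = (x + U_1 − U_3)/a. Then for each i ∈ {1,2,3,4} such that y_i ∈ [−1,1], there exists k ∈ {1,2,3} with ℓ_{2k}(x) ≤ y_i ≤ ℓ_{2k−1}(x). -/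
/-- The six lines `ℓ_1, …, ℓ_6` bounding the three slanted stripes. -/
noncomputable def larssonLine (a b : ℝ) : ℕ → ℝ → ℝ
  | 1 => fun x => x / a + (1 - a - 2 * b) / a
  | 2 => fun x => x / a + 2
  | 3 => fun x => x / a + (1 - 3 * a - 2 * b) / (2 * a)
  | 4 => fun x => x / a - (1 - 3 * a - 2 * b) / (2 * a)
  | 5 => fun x => x / a - 2
  | 6 => fun x => x / a - (1 - a - 2 * b) / a
  | _ => fun _ => 0

/-! After multiplication by `a` and translation by `-x`, the three stripes become the intervals of
common half-width `t = (1 - 3a - 2b) / 2` centred at `c`, `0` and `-c`, where `c = 1/2 + a/2 - b`.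
In the same coordinate the four types are `-c`, `0`, `c` and `0`, each perturbed by a difference
`U_i - U_j` of two points of `[0, t]`, and such a difference has absolute value at most `t`. -/

/-- The vertical section at `x` of the `k`-th slanted stripe, the region between the lines `ℓ_{2k}`
and `ℓ_{2k−1}`. Only `k = 1, 2, 3` are meaningful, since `larssonLine` is indexed by `1, …, 6`. -/
def larssonStripe (a b : ℝ) (k : ℕ) (x : ℝ) : Set ℝ :=
  Set.Icc (larssonLine a b (2 * k) x) (larssonLine a b (2 * k - 1) x)

section

variable {a b x : ℝ}

theorem larssonStripe_eq_Icc (ha : a ≠ 0) {k : ℕ} (hk : k ∈ ({1, 2, 3} : Set ℕ)) :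
    larssonStripe a b k x =
      Set.Icc ((x + (2 - k) * (1 / 2 + a / 2 - b) - (1 - 3 * a - 2 * b) / 2) / a)
        ((x + (2 - k) * (1 / 2 + a / 2 - b) + (1 - 3 * a - 2 * b) / 2) / a) := by
  rcases hk with rfl | rfl | rfl <;> simp only [larssonStripe, larssonLine] <;> push_cast <;>
    congr 1 <;> field_simp <;> ring

theorem center_add_sub_div_mem_larssonStripe (ha : 0 < a) {k : ℕ}
    (hk : k ∈ ({1, 2, 3} : Set ℕ)) {U V : ℝ}
    (hU : U ∈ Set.Icc (0 : ℝ) ((1 - 3 * a - 2 * b) / 2))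
    (hV : V ∈ Set.Icc (0 : ℝ) ((1 - 3 * a - 2 * b) / 2)) :
    (x + (2 - k) * (1 / 2 + a / 2 - b) + (U - V)) / a ∈ larssonStripe a b k x := by
  obtain ⟨hlower, hupper⟩ := abs_le.1 (abs_sub_le_of_nonneg_of_le hU.1 hU.2 hV.1 hV.2)
  rw [larssonStripe_eq_Icc ha.ne' hk, Set.mem_Icc, div_le_div_iff_of_pos_right ha,
    div_le_div_iff_of_pos_right ha, sub_eq_add_neg (x + _)]
  exact ⟨by gcongr, by gcongr⟩

theorem types_lie_in_stripes_general (ha : 0 < a) {U₁ U₂ U₃ U₄ : ℝ}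
    (hU₁ : U₁ ∈ Set.Icc (0 : ℝ) ((1 - 3 * a - 2 * b) / 2))
    (hU₂ : U₂ ∈ Set.Icc (0 : ℝ) ((1 - 3 * a - 2 * b) / 2))
    (hU₃ : U₃ ∈ Set.Icc (0 : ℝ) ((1 - 3 * a - 2 * b) / 2))
    (hU₄ : U₄ ∈ Set.Icc (0 : ℝ) ((1 - 3 * a - 2 * b) / 2)) :
    ∀ y ∈ ({(x - 1 / 2 - a / 2 + b + U₁ - U₄) / a,
            (x + U₂ - U₄) / a,
            (x + 1 / 2 + a / 2 - b + U₂ - U₃) / a,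
            (x + U₁ - U₃) / a} : Set ℝ),
      ∃ k ∈ ({1, 2, 3} : Set ℕ), y ∈ larssonStripe a b k x := by
  rintro y (rfl | rfl | rfl | rfl)
  · refine ⟨3, by simp, ?_⟩
    convert center_add_sub_div_mem_larssonStripe ha (k := 3) (by simp) hU₁ hU₄ using 2
    push_cast
    ring
  · refine ⟨2, by simp, ?_⟩
    convert center_add_sub_div_mem_larssonStripe ha (k := 2) (by simp) hU₂ hU₄ using 2
    push_cast
    ring
  · refine ⟨1, by simp, ?_⟩
    convert center_add_sub_div_mem_larssonStripe ha (k := 1) (by simp) hU₂ hU₃ using 2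
    push_cast
    ring
  · refine ⟨2, by simp, ?_⟩
    convert center_add_sub_div_mem_larssonStripe ha (k := 2) (by simp) hU₁ hU₃ using 2
    push_cast
    ring

end

/-- Each of the four candidate types `y_1, …, y_4` lying in `[−1,1]` belongs to one of the
three slanted stripes: there is `k ∈ {1,2,3}` with `ℓ_{2k}(x) ≤ y_i ≤ ℓ_{2k−1}(x)`. -/
theorem types_lie_in_stripes
    (a b : ℝ) (ha : 1 / 4 < a) (hb : 0 < b) (hab : 3 * a + 2 * b < 1)
    (x : ℝ) (hx : x ∈ Set.Icc (-1 : ℝ) 1)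
    (U₁ U₂ U₃ U₄ : ℝ)
    (hU₁ : U₁ ∈ Set.Icc (0 : ℝ) ((1 - 3 * a - 2 * b) / 2))
    (hU₂ : U₂ ∈ Set.Icc (0 : ℝ) ((1 - 3 * a - 2 * b) / 2))
    (hU₃ : U₃ ∈ Set.Icc (0 : ℝ) ((1 - 3 * a - 2 * b) / 2))
    (hU₄ : U₄ ∈ Set.Icc (0 : ℝ) ((1 - 3 * a - 2 * b) / 2)) :
    ∀ y ∈ ({(x - 1 / 2 - a / 2 + b + U₁ - U₄) / a,
            (x + U₂ - U₄) / a,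
            (x + 1 / 2 + a / 2 - b + U₂ - U₃) / a,
            (x + U₁ - U₃) / a} : Set ℝ),
      y ∈ Set.Icc (-1 : ℝ) 1 →
        ∃ k : ℕ, k ∈ ({1, 2, 3} : Set ℕ) ∧
          larssonLine a b (2 * k) x ≤ y ∧ y ≤ larssonLine a b (2 * k - 1) x := by
  exact fun y hy _ ↦ types_lie_in_stripes_general (by linarith) hU₁ hU₂ hU₃ hU₄ y hy
end

section
/- For every x ∈ [−1,1] with |x| > 1 − 2b, all U_1, U_2, U_3, U_4 ∈ [0, t] and every i ∈ {1,2,3,4}, one has |(v_i − u_i) − x| > a; equivalently, the line e(x) = {(s, s + x) : s ∈ ℝ} is disjoint from each of the four level-one squares Q_i. -/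
/-!
All corner coordinates lie in `[b, 1 - b - a]`, an interval of length `1 - 2b - a`, so
`|v_i - u_i| ≤ 1 - 2b - a` and hence `|(v_i - u_i) - x| ≥ |x| - |v_i - u_i| > a`. The projection
`(p, q) ↦ q - p` sends `Q_i` onto the interval of radius `a` about `v_i - u_i` and `e(x)` to the
point `x`, so this inequality says exactly that `e(x)` misses `Q_i`.
-/

open Set

section OrderedGroup

variable {G : Type*} [AddCommGroup G] [LinearOrder G] [IsOrderedAddMonoid G]

theorem forall_notMem_square_iff_lt_abs {a u v x : G} :
    (∀ s : G, (s, s + x) ∉ Icc u (u + a) ×ˢ Icc v (v + a)) ↔ a < |(v - u) - x| := by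
  rw [← not_le, ← not_exists, not_iff_not]
  simp only [mem_prod, mem_Icc, abs_le]
  constructor
  · rintro ⟨s, ⟨hus, hsu⟩, hvs, hsv⟩
    constructor <;> grind
  · rintro ⟨hlower, hupper⟩
    -- The smallest `s` at which the line has passed both the left and the bottom side.
    refine ⟨max u (v - x), ?_⟩
    grind

theorem lt_abs_sub_sub_of_mem_Icc {a c d u v x : G} (hu : u ∈ Icc c d) (hv : v ∈ Icc c d)
    (hx : d - c + a < |x|) : a < |(v - u) - x| :=
  calc
    a < |x| - (d - c) := lt_sub_iff_add_lt'.mpr hx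
    _ ≤ |x| - |v - u| := sub_le_sub_left (abs_sub_le_of_le_of_le hv.1 hv.2 hu.1 hu.2) _
    _ ≤ |x - (v - u)| := abs_sub_abs_le_abs_sub _ _
    _ = |(v - u) - x| := abs_sub_comm _ _

end OrderedGroup

section LevelOneSquares

variable {K : Type*} [Field K] [LinearOrder K] [IsStrictOrderedRing K] {a b U : K}

theorem near_corner_mem_Icc (ha : 0 ≤ a) (hU : U ∈ Icc 0 ((1 - 3 * a - 2 * b) / 2)) :
    b + U ∈ Icc b (1 - b - a) := by
  obtain ⟨hU_nonneg, hU_le⟩ := hU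
  constructor <;> linarith

theorem far_corner_mem_Icc (ha : 0 ≤ a) (hU : U ∈ Icc 0 ((1 - 3 * a - 2 * b) / 2)) :
    1 / 2 + a / 2 + U ∈ Icc b (1 - b - a) := by
  obtain ⟨hU_nonneg, hU_le⟩ := hU
  constructor <;> linarith

theorem line_misses_level_one_squares_general (ha : 0 ≤ a) {x : K} (hx : 1 - 2 * b < |x|)
    {U₁ U₂ U₃ U₄ : K}
    (hU₁ : U₁ ∈ Icc 0 ((1 - 3 * a - 2 * b) / 2)) (hU₂ : U₂ ∈ Icc 0 ((1 - 3 * a - 2 * b) / 2))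
    (hU₃ : U₃ ∈ Icc 0 ((1 - 3 * a - 2 * b) / 2)) (hU₄ : U₄ ∈ Icc 0 ((1 - 3 * a - 2 * b) / 2))
    {u v : Fin 4 → K}
    (hu : u = ![b + U₁, 1 / 2 + a / 2 + U₂, 1 / 2 + a / 2 + U₂, b + U₁])
    (hv : v = ![1 / 2 + a / 2 + U₄, 1 / 2 + a / 2 + U₄, b + U₃, b + U₃]) (i : Fin 4) :
    a < |(v i - u i) - x| ∧
      ∀ s : K, (s, s + x) ∉ Icc (u i) (u i + a) ×ˢ Icc (v i) (v i + a) := by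
  have hu_mem : u i ∈ Icc b (1 - b - a) := by
    subst hu
    fin_cases i
    exacts [near_corner_mem_Icc ha hU₁, far_corner_mem_Icc ha hU₂,
      far_corner_mem_Icc ha hU₂, near_corner_mem_Icc ha hU₁]
  have hv_mem : v i ∈ Icc b (1 - b - a) := by
    subst hv
    fin_cases i
    exacts [far_corner_mem_Icc ha hU₄, far_corner_mem_Icc ha hU₄,
      near_corner_mem_Icc ha hU₃, near_corner_mem_Icc ha hU₃]
  have hgap : a < |(v i - u i) - x| :=
    lt_abs_sub_sub_of_mem_Icc hu_mem hv_mem (by linarith)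
  exact ⟨hgap, forall_notMem_square_iff_lt_abs.mpr hgap⟩

end LevelOneSquares

/-- For `x ∈ [−1,1]` with `|x| > 1 − 2b`, the line `e(x) = {(s, s+x)}` misses all four
level-one squares: `|(v_i − u_i) − x| > a` for each `i`, equivalently `e(x) ∩ Q_i = ∅`. -/
theorem line_misses_level_one_squares
    (a b : ℝ) (ha : 1 / 4 < a) (hb : 0 < b) (hab : 3 * a + 2 * b < 1)
    (x : ℝ) (hx : x ∈ Set.Icc (-1 : ℝ) 1) (hx' : 1 - 2 * b < |x|)
    (U₁ U₂ U₃ U₄ : ℝ)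
    (hU₁ : U₁ ∈ Set.Icc (0 : ℝ) ((1 - 3 * a - 2 * b) / 2))
    (hU₂ : U₂ ∈ Set.Icc (0 : ℝ) ((1 - 3 * a - 2 * b) / 2))
    (hU₃ : U₃ ∈ Set.Icc (0 : ℝ) ((1 - 3 * a - 2 * b) / 2))
    (hU₄ : U₄ ∈ Set.Icc (0 : ℝ) ((1 - 3 * a - 2 * b) / 2))
    (u v : Fin 4 → ℝ)
    (hu : u = ![b + U₁, 1 / 2 + a / 2 + U₂, 1 / 2 + a / 2 + U₂, b + U₁])
    (hv : v = ![1 / 2 + a / 2 + U₄, 1 / 2 + a / 2 + U₄, b + U₃, b + U₃]) :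
    ∀ i : Fin 4, a < |(v i - u i) - x| ∧
      ∀ s : ℝ, (s, s + x) ∉ Set.Icc (u i) (u i + a) ×ˢ Set.Icc (v i) (v i + a) :=
  line_misses_level_one_squares_general (by linarith) hx' hU₁ hU₂ hU₃ hU₄ hu hv
end

section
/- Let ℓ_1(x) = (x + 1 − a − 2b)/a and c = 2b/(1−a). Then ℓ_1(x) − x = ((1−a)/a)·(x − (−1 + c)) for all x ∈ ℝ, so −1 + c is the unique fixed point of ℓ_1; moreover, for every x_0 ∈ [−1, −1 + c) and every sequence (x_k)_{k≥0} of reals with x_{k+1} ≤ ℓ_1(x_k) for all k ≥ 0, there exists n with x_n < −1. -/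
/-!
Writing `p = -1 + c`, the map `ℓ₁` is the homothety `x ↦ p + a⁻¹ (x - p)`, whose ratio `a⁻¹`
exceeds `1`. A sequence starting below `p` and dominated by `ℓ₁` at each step therefore has its
distance `p - X k` below `p` growing at least geometrically.
-/

open Filter Function

theorem le_add_pow_mul_sub {R : Type*} [Ring R] [PartialOrder R] [IsOrderedRing R]
    {u : ℕ → R} {p r : R} (hr : 0 ≤ r) (hu : ∀ k, u (k + 1) ≤ p + r * (u k - p)) (n : ℕ) :
    u n ≤ p + r ^ n * (u 0 - p) := by
  induction n with
  | zero => simp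
  | succ n ih =>
    calc u (n + 1) ≤ p + r * (u n - p) := hu n
      _ ≤ p + r * (r ^ n * (u 0 - p)) := by
        gcongr
        exact sub_le_iff_le_add'.2 ih
      _ = p + r ^ (n + 1) * (u 0 - p) := by rw [pow_succ', mul_assoc]

theorem tendsto_atBot_of_le_add_mul_sub {K : Type*} [Field K] [LinearOrder K]
    [IsStrictOrderedRing K] [Archimedean K] {u : ℕ → K} {p r : K} (hr : 1 < r) (h₀ : u 0 < p)
    (hu : ∀ k, u (k + 1) ≤ p + r * (u k - p)) : Tendsto u atTop atBot :=
  tendsto_atBot_mono (le_add_pow_mul_sub (zero_le_one.trans hr.le) hu) <|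
    tendsto_atBot_add_const_left atTop p <|
      (tendsto_pow_atTop_atTop_of_one_lt hr).atTop_mul_const_of_neg (sub_neg.2 h₀)

/-- The affine map `ℓ₁` with parameters `a` and `b`, which dominates the sequences whose escape is
studied; at `a = 0` the division makes it the junk constant `0`. -/
def ellOne {K : Type*} [Field K] (a b x : K) : K := (x + 1 - a - 2 * b) / a

section Field

variable {K : Type*} [Field K] {a : K}

theorem ellOne_eq_add_inv_mul_sub (ha₀ : a ≠ 0) (ha₁ : a ≠ 1) (b x : K) :
    ellOne a b x = (-1 + 2 * b / (1 - a)) + a⁻¹ * (x - (-1 + 2 * b / (1 - a))) := by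
  have h : 1 - a ≠ 0 := sub_ne_zero.2 ha₁.symm
  unfold ellOne
  field_simp
  ring

theorem ellOne_sub_self (ha₀ : a ≠ 0) (ha₁ : a ≠ 1) (b x : K) :
    ellOne a b x - x = (1 - a) / a * (x - (-1 + 2 * b / (1 - a))) := by
  rw [ellOne_eq_add_inv_mul_sub ha₀ ha₁, sub_div, div_self ha₀, one_div]
  ring

theorem isFixedPt_ellOne_iff (ha₀ : a ≠ 0) (ha₁ : a ≠ 1) (b x : K) :
    IsFixedPt (ellOne a b) x ↔ x = -1 + 2 * b / (1 - a) := by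
  have hslope : (1 - a) / a ≠ 0 := div_ne_zero (sub_ne_zero.2 ha₁.symm) ha₀
  rw [IsFixedPt, ← sub_eq_zero, ellOne_sub_self ha₀ ha₁, mul_eq_zero_iff_left hslope, sub_eq_zero]

end Field

section Archimedean

variable {K : Type*} [Field K] [LinearOrder K] [IsStrictOrderedRing K] [Archimedean K]

theorem tendsto_atBot_of_le_ellOne {a b : K} (ha₀ : 0 < a) (ha₁ : a < 1) {X : ℕ → K}
    (h₀ : X 0 < -1 + 2 * b / (1 - a)) (hX : ∀ k, X (k + 1) ≤ ellOne a b (X k)) :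
    Tendsto X atTop atBot :=
  tendsto_atBot_of_le_add_mul_sub ((one_lt_inv₀ ha₀).2 ha₁) h₀ fun k ↦
    (hX k).trans_eq (ellOne_eq_add_inv_mul_sub ha₀.ne' ha₁.ne b (X k))

theorem ell_one_fixed_point_and_escape_general {a b c : K} (ha₀ : 0 < a) (ha₁ : a < 1)
    (hc : c = 2 * b / (1 - a)) :
    (∀ x, ellOne a b x - x = (1 - a) / a * (x - (-1 + c))) ∧
    (∀ x, IsFixedPt (ellOne a b) x ↔ x = -1 + c) ∧
    (∀ X : ℕ → K, X 0 < -1 + c → (∀ k, X (k + 1) ≤ ellOne a b (X k)) →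
      Tendsto X atTop atBot) := by
  subst hc
  exact ⟨ellOne_sub_self ha₀.ne' ha₁.ne b, isFixedPt_ellOne_iff ha₀.ne' ha₁.ne b,
    fun _ ↦ tendsto_atBot_of_le_ellOne ha₀ ha₁⟩

end Archimedean

/-- With `ℓ₁(x) = (x + 1 − a − 2b)/a` and `c = 2b/(1−a)`:
`ℓ₁(x) − x = ((1−a)/a)·(x − (−1+c))` for all `x`, so `−1+c` is the unique fixed point of
`ℓ₁`; moreover for every `x₀ ∈ [−1, −1+c)` and every sequence with `x_{k+1} ≤ ℓ₁(x_k)`,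
some `x_n < −1`. -/
theorem ell_one_fixed_point_and_escape
    (a b : ℝ) (ha : 1 / 4 < a) (hb : 0 < b) (hab : 3 * a + 2 * b < 1)
    (c : ℝ) (hc : c = 2 * b / (1 - a)) :
    (∀ x : ℝ, (x + 1 - a - 2 * b) / a - x = ((1 - a) / a) * (x - (-1 + c))) ∧
    (∀ x : ℝ, (x + 1 - a - 2 * b) / a = x ↔ x = -1 + c) ∧
    (∀ x₀ ∈ Set.Ico (-1 : ℝ) (-1 + c), ∀ X : ℕ → ℝ, X 0 = x₀ →
      (∀ k : ℕ, X (k + 1) ≤ (X k + 1 - a - 2 * b) / a) → ∃ n : ℕ, X n < -1) := by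
  obtain ⟨hsub, hfix, hescape⟩ :=
    ell_one_fixed_point_and_escape_general (by linarith : 0 < a) (by linarith) hc
  exact ⟨hsub, hfix, fun _ hx₀ X h₀ hX ↦
    ((hescape X (h₀ ▸ hx₀.2) hX).eventually_lt_atBot (-1)).exists⟩
end

section
/- Assume in addition 1 − 4a − 2b + 3a² − 6ab > 0 (equivalently c < (1−3a−2b)/(4a)), let ε satisfy 0 < ε < (1−3a−2b)/(4a) − c, and put T = [−1 + c + ε, 1 − c − ε]. Then there exists κ > 0 such that for every x ∈ T the set E_1(x) = {y : m_T(x, y) > 0} contains an interval of length κ. -/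
open MeasureTheory

/-- The triangular density: `f_t(z) = (t − |z|)/t²` for `|z| ≤ t` and `0` otherwise. -/
noncomputable def triangularDensity (t z : ℝ) : ℝ :=
  if |z| ≤ t then (t - |z|) / t ^ 2 else 0

/-- The kernel `m_T(x,y)` of the branching process, with `t = (1−3a−2b)/2`:
`m_T(x,y) = [a f_t(ay + 1/2 + a/2 − b − x) + 2a f_t(ay − x) + a f_t(ay − 1/2 − a/2 + b − x)]·1_T(y)`. -/
noncomputable def larssonKernel (a b : ℝ) (T : Set ℝ) (x y : ℝ) : ℝ :=
  (a * triangularDensity ((1 - 3 * a - 2 * b) / 2) (a * y + 1 / 2 + a / 2 - b - x) +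
      2 * a * triangularDensity ((1 - 3 * a - 2 * b) / 2) (a * y - x) +
      a * triangularDensity ((1 - 3 * a - 2 * b) / 2) (a * y - 1 / 2 - a / 2 + b - x)) *
    Set.indicator T (fun _ => (1 : ℝ)) y

/-- The iterated kernels, with the index shifted by one:
`larssonKernelIter a b T n = m_T^{(n+1)}`, i.e. `larssonKernelIter a b T 0 = m_T^{(1)} = m_T`
and `m_T^{(n+1)}(x,y) = ∫_T m_T^{(n)}(x,z) m_T(z,y) dz`. -/
noncomputable def larssonKernelIter (a b : ℝ) (T : Set ℝ) : ℕ → ℝ → ℝ → ℝ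
  | 0 => larssonKernel a b T
  | (n + 1) => fun x y => ∫ z in T, larssonKernelIter a b T n x z * larssonKernel a b T z y

/-!
Write `t = (1 - 3a - 2b)/2`, `s = 1/2 + a/2 - b` and `T = [-r, r]`. Since the density `f_t` is
positive exactly on `(-t, t)`, `m_T(x, y) > 0` means that `y ∈ T` and that `a y` is within `t` of
one of the centres `x - s`, `x`, `x + s`. The points `y ∈ T` with `|a y - v| < t` contain an
interval of length `κ` as soon as `κ ≤ 2r`, `a κ ≤ 2t` and `|v| ≤ R := a r + t - a κ`. Consecutive
centres are `s` apart, so one of them lies in `[-R, R]` whenever `s ≤ 2R` and `|x| ≤ s + R`. For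
small `κ` both conditions hold on all of `T` once `s < 2 (a r + t)` and `r < s + a r + t`. For
`r = 1 - c - ε`, the upper bound on `ε` is the first of these inequalities and `0 < ε` is the
second.
-/

theorem triangularDensity_nonneg (t z : ℝ) : 0 ≤ triangularDensity t z := by
  unfold triangularDensity
  split_ifs with h
  · exact div_nonneg (sub_nonneg.2 h) (sq_nonneg t)
  · exact le_rfl

theorem triangularDensity_pos_iff {t z : ℝ} : 0 < triangularDensity t z ↔ |z| < t := by
  refine ⟨fun h => ?_, fun h => ?_⟩
  · contrapose! h
    unfold triangularDensity
    split_ifs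
    · exact div_nonpos_of_nonpos_of_nonneg (sub_nonpos.2 h) (sq_nonneg t)
    · exact le_rfl
  · rw [triangularDensity, if_pos h.le]
    exact div_pos (sub_pos.2 h) (pow_pos ((abs_nonneg z).trans_lt h) 2)

theorem larssonKernel_pos_iff {a b x y : ℝ} {T : Set ℝ} (ha : 0 < a) :
    0 < larssonKernel a b T x y ↔ y ∈ T ∧ ∃ k ∈ ({-1, 0, 1} : Set ℝ),
      |a * y - (x + k * (1 / 2 + a / 2 - b))| < (1 - 3 * a - 2 * b) / 2 := by
  have add_pos_iff_or {p q : ℝ} (hp : 0 ≤ p) (hq : 0 ≤ q) : 0 < p + q ↔ 0 < p ∨ 0 < q := by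
    grind
  have mul_density_nonneg {w : ℝ} (hw : 0 < w) (t z : ℝ) : 0 ≤ w * triangularDensity t z :=
    mul_nonneg hw.le (triangularDensity_nonneg t z)
  have h2a : 0 < 2 * a := by positivity
  by_cases hy : y ∈ T
  · rw [larssonKernel, Set.indicator_of_mem hy, mul_one,
      add_pos_iff_or (add_nonneg (mul_density_nonneg ha _ _) (mul_density_nonneg h2a _ _))
        (mul_density_nonneg ha _ _),
      add_pos_iff_or (mul_density_nonneg ha _ _) (mul_density_nonneg h2a _ _),
      mul_pos_iff_of_pos_left ha, mul_pos_iff_of_pos_left h2a, mul_pos_iff_of_pos_left ha]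
    simp only [triangularDensity_pos_iff, hy, true_and, Set.mem_insert_iff, Set.mem_singleton_iff,
      exists_eq_or_imp, exists_eq_left, or_assoc]
    ring_nf
  · simp [larssonKernel, hy]

theorem exists_Ioo_subset_Icc_inter_abs_mul_sub_lt {a p q t v κ : ℝ} (ha : 0 < a)
    (hκ : κ ≤ q - p) (ht : a * κ ≤ 2 * t) (hp : a * p + a * κ ≤ v + t)
    (hq : v - t + a * κ ≤ a * q) :
    ∃ u, Set.Ioo u (u + κ) ⊆ Set.Icc p q ∩ {y | |a * y - v| < t} := by
  have preimage_eq : {y | |a * y - v| < t} = Set.Ioo ((v - t) / a) ((v + t) / a) := by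
    ext y
    rw [Set.mem_ofPred_eq, abs_lt, Set.mem_Ioo, div_lt_iff₀' ha, lt_div_iff₀' ha]
    constructor <;> rintro ⟨hl, hu⟩ <;> constructor <;> linarith
  have upper_le : max p ((v - t) / a) + κ ≤ min q ((v + t) / a) := by
    have mul_lower : a * ((v - t) / a) = v - t := mul_div_cancel₀ _ ha.ne'
    rw [← max_add_add_right]
    refine max_le (le_min ?_ ((le_div_iff₀' ha).2 ?_))
      (le_min (le_of_mul_le_mul_left ?_ ha) ((le_div_iff₀' ha).2 ?_)) <;> linarith
  refine ⟨max p ((v - t) / a), ?_⟩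
  calc Set.Ioo (max p ((v - t) / a)) (max p ((v - t) / a) + κ)
      ⊆ Set.Ioo (max p ((v - t) / a)) (min q ((v + t) / a)) := Set.Ioo_subset_Ioo_right upper_le
    _ = Set.Ioo p q ∩ Set.Ioo ((v - t) / a) ((v + t) / a) := Set.Ioo_inter_Ioo.symm
    _ ⊆ Set.Icc p q ∩ {y | |a * y - v| < t} := by
      rw [preimage_eq]
      exact Set.inter_subset_inter_left _ Set.Ioo_subset_Icc_self

theorem exists_abs_add_mul_le {s x R : ℝ} (hs : s ≤ 2 * R) (hx : |x| ≤ s + R) :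
    ∃ k ∈ ({-1, 0, 1} : Set ℝ), |x + k * s| ≤ R := by
  obtain ⟨hl, hu⟩ := abs_le.1 hx
  rcases lt_or_ge R x with hRx | hxR
  · exact ⟨-1, by simp, abs_le.2 ⟨by linarith, by linarith⟩⟩
  rcases lt_or_ge x (-R) with hxR' | hRx'
  · exact ⟨1, by simp, abs_le.2 ⟨by linarith, by linarith⟩⟩
  · exact ⟨0, by simp, abs_le.2 ⟨by linarith, by linarith⟩⟩

theorem exists_uniform_Ioo_subset_Icc_inter_abs_mul_sub_lt {a r s t : ℝ} (ha : 0 < a)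
    (hr : 0 < r) (ht : 0 < t) (hcover : s < 2 * (a * r + t)) (hreach : r < s + (a * r + t)) :
    ∃ κ > 0, ∀ x ∈ Set.Icc (-r) r, ∃ k ∈ ({-1, 0, 1} : Set ℝ), ∃ u,
      Set.Ioo u (u + κ) ⊆ Set.Icc (-r) r ∩ {y | |a * y - (x + k * s)| < t} := by
  obtain ⟨δ, hδ, hδ'⟩ : ∃ δ > 0,
      δ < min (min (a * r) t) (min (a * r + t - s / 2) (s + (a * r + t) - r)) :=
    exists_between (lt_min (lt_min (mul_pos ha hr) ht) (lt_min (by linarith) (by linarith)))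
  simp only [lt_min_iff] at hδ'
  obtain ⟨⟨hδr, hδt⟩, hδcover, hδreach⟩ := hδ'
  have mul_width : a * (δ / a) = δ := mul_div_cancel₀ δ ha.ne'
  have width_le : δ / a ≤ r := (div_le_iff₀' ha).2 hδr.le
  refine ⟨δ / a, div_pos hδ ha, fun x hx => ?_⟩
  obtain ⟨k, hk, hkx⟩ : ∃ k ∈ ({-1, 0, 1} : Set ℝ), |x + k * s| ≤ a * r + t - δ :=
    exists_abs_add_mul_le (by linarith) ((abs_le.2 hx).trans (by linarith))
  obtain ⟨hl, hu⟩ := abs_le.1 hkx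
  exact ⟨k, hk, exists_Ioo_subset_Icc_inter_abs_mul_sub_lt ha
    (by linarith) (by linarith) (by linarith) (by linarith)⟩

theorem kernel_support_contains_interval_simple_case_general {a b r : ℝ} (ha : 0 < a)
    (hab : 3 * a + 2 * b < 1) (hr : 0 < r) (hreach : (1 - a) * r < 1 - a - 2 * b)
    (hcover : 7 * a + 2 * b - 1 < 4 * (a * r)) :
    ∃ κ > (0 : ℝ), ∀ x ∈ Set.Icc (-r) r, ∃ u : ℝ,
      Set.Ioo u (u + κ) ⊆ {y : ℝ | 0 < larssonKernel a b (Set.Icc (-r) r) x y} := by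
  obtain ⟨κ, hκ, hsupport⟩ := exists_uniform_Ioo_subset_Icc_inter_abs_mul_sub_lt
    (s := 1 / 2 + a / 2 - b) (t := (1 - 3 * a - 2 * b) / 2) ha hr
    (by linarith) (by linarith) (by linarith)
  refine ⟨κ, hκ, fun x hx => ?_⟩
  obtain ⟨k, hk, u, hu⟩ := hsupport x hx
  exact ⟨u, fun y hy => (larssonKernel_pos_iff ha).2 ⟨(hu hy).1, k, hk, (hu hy).2⟩⟩

theorem simple_case_radius_bounds {a b c ε : ℝ} (ha : 0 < a) (ha1 : a < 1)
    (hc : c = 2 * b / (1 - a)) (hε : 0 < ε) (hε' : ε < (1 - 3 * a - 2 * b) / (4 * a) - c) :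
    (1 - a) * (1 - c - ε) < 1 - a - 2 * b ∧ 7 * a + 2 * b - 1 < 4 * (a * (1 - c - ε)) := by
  have h1a : 0 < 1 - a := sub_pos.2 ha1
  have hca : c * (1 - a) = 2 * b := (eq_div_iff h1a.ne').1 hc
  have hεc : (ε + c) * (4 * a) < 1 - 3 * a - 2 * b :=
    (lt_div_iff₀ (by positivity)).1 (lt_sub_iff_add_lt.1 hε')
  have hεa : 0 < ε * (1 - a) := mul_pos hε h1a
  exact ⟨by linarith, by linarith⟩

/-- In the simple case `1 − 4a − 2b + 3a² − 6ab > 0`, with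
`T = [−1 + c + ε, 1 − c − ε]`, there is `κ > 0` such that for every `x ∈ T` the set
`E₁(x) = {y : m_T(x,y) > 0}` contains an interval of length `κ`. -/
theorem kernel_support_contains_interval_simple_case
    (a b : ℝ) (ha : 1 / 4 < a) (hb : 0 < b) (hab : 3 * a + 2 * b < 1)
    (c : ℝ) (hc : c = 2 * b / (1 - a))
    (hsimple : 0 < 1 - 4 * a - 2 * b + 3 * a ^ 2 - 6 * a * b)
    (ε : ℝ) (hε : 0 < ε) (hε' : ε < (1 - 3 * a - 2 * b) / (4 * a) - c)
    (T : Set ℝ) (hT : T = Set.Icc (-1 + c + ε) (1 - c - ε)) :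
    ∃ κ > (0 : ℝ), ∀ x ∈ T, ∃ u : ℝ,
      Set.Ioo u (u + κ) ⊆ {y : ℝ | 0 < larssonKernel a b T x y} := by
  have ha0 : 0 < a := by linarith
  obtain ⟨hreach, hcover⟩ := simple_case_radius_bounds ha0 (by linarith) hc hε hε'
  have hr : 0 < 1 - c - ε := (mul_pos_iff_of_pos_left ha0).1 (by linarith)
  have hT' : T = Set.Icc (-(1 - c - ε)) (1 - c - ε) := by rw [hT]; congr 1; ring
  exact hT' ▸ kernel_support_contains_interval_simple_case_general ha0 hab hr hreach hcover
end

section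
/- Let T(0) = [−1 + c, 1 − c]. Then for every y ∈ T(0), ∫_{−1+c}^{1−c} m_{T(0)}(x, y) dx = 4a; that is, the constant function 1 on T(0) is an eigenfunction with eigenvalue 4a of the operator h ↦ ∫_{T(0)} h(x)·m_{T(0)}(x, ·) dx. -/
open MeasureTheory

/-!
For fixed `y ∈ T`, the function `m_T(·, y)` is a combination, with weights `a`, `2a`, `a`, of
triangular probability densities of half-width `t` centred at `ay + s`, `ay`, `ay - s`, where
`s = 1/2 + a/2 - b`; its total mass is therefore `4a`. If `|y| ≤ r`, all three triangles lie over
`[-r, r]` as soon as `ar + s + t ≤ r`. Since `s + t = 1 - a - 2b`, this says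
`1 - a - 2b ≤ (1 - a) r`, with equality at the endpoint `r = 1 - c` of `T(0)`.
-/

section TriangularDensity

variable {t : ℝ}

theorem triangularDensity_eq_zero {z : ℝ} (h : t ≤ |z|) : triangularDensity t z = 0 := by
  grind [triangularDensity]

theorem triangularDensity_abs (t z : ℝ) : triangularDensity t |z| = triangularDensity t z := by
  simp only [triangularDensity, abs_abs]

theorem continuous_triangularDensity (t : ℝ) : Continuous (triangularDensity t) := by
  have h_max : triangularDensity t = fun z => max 0 (t - |z|) / t ^ 2 := by
    ext z
    grind [triangularDensity]
  rw [h_max]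
  fun_prop

theorem integrable_triangularDensity (t : ℝ) : Integrable (triangularDensity t) :=
  (continuous_triangularDensity t).integrable_of_hasCompactSupport <|
    .intro (isCompact_closedBall 0 t) fun _ hz =>
      triangularDensity_eq_zero (le_of_lt (by simpa using hz))

theorem integral_triangularDensity (ht : 0 < t) : ∫ z, triangularDensity t z = 1 := by
  have h_right : ∫ z in Set.Ioi 0, triangularDensity t z = ∫ z in 0..t, (t - z) / t ^ 2 := by
    rw [intervalIntegral.integral_of_le ht.le]
    refine (setIntegral_eq_of_subset_of_forall_sdiff_eq_zero measurableSet_Ioi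
      Set.Ioc_subset_Ioi_self fun z hz => ?_).trans
        (setIntegral_congr_fun measurableSet_Ioc fun z hz => ?_)
    · grind [triangularDensity_eq_zero]
    · grind [triangularDensity]
  calc ∫ z, triangularDensity t z
      = ∫ z, triangularDensity t |z| := by simp only [triangularDensity_abs]
    _ = 2 * ∫ z in 0..t, (t - z) / t ^ 2 := by rw [integral_comp_abs, h_right]
    _ = 1 := by
      rw [intervalIntegral.integral_div, intervalIntegral.integral_comp_sub_left (fun z => z),
        integral_id]
      field_simp
      ring

end TriangularDensity

section LarssonKernel

variable {a b : ℝ}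

theorem integral_larssonKernel (hab : 3 * a + 2 * b < 1) (T : Set ℝ) (y : ℝ) :
    ∫ x, larssonKernel a b T x y = 4 * a * T.indicator (fun _ => 1) y := by
  have ht : 0 < (1 - 3 * a - 2 * b) / 2 := by linarith
  have h_int (k p : ℝ) :
      Integrable fun x => k * triangularDensity ((1 - 3 * a - 2 * b) / 2) (p - x) :=
    ((integrable_triangularDensity _).comp_sub_left p).const_mul k
  have h_mass (k p : ℝ) :
      ∫ x, k * triangularDensity ((1 - 3 * a - 2 * b) / 2) (p - x) = k := by
    rw [integral_const_mul, integral_sub_left_eq_self (triangularDensity _) volume p,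
      integral_triangularDensity ht, mul_one]
  simp only [larssonKernel]
  rw [integral_mul_const, integral_add ((h_int _ _).fun_add (h_int _ _)) (h_int _ _),
    integral_add (h_int _ _) (h_int _ _), h_mass, h_mass, h_mass]
  ring

theorem larssonKernel_eq_zero_of_notMem_Icc (ha : 0 ≤ a) (hab : 3 * a + 2 * b < 1) {r : ℝ}
    (hr : 1 - a - 2 * b ≤ (1 - a) * r) (T : Set ℝ) {x y : ℝ} (hy : y ∈ Set.Icc (-r) r)
    (hx : x ∉ Set.Icc (-r) r) : larssonKernel a b T x y = 0 := by
  have h_outside : r < |x| := by rwa [Set.mem_Icc, ← abs_le, not_le] at hx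
  have h_lower : a * -r ≤ a * y := mul_le_mul_of_nonneg_left hy.1 ha
  have h_upper : a * y ≤ a * r := mul_le_mul_of_nonneg_left hy.2 ha
  have h_shift : 0 ≤ 1 / 2 + a / 2 - b := by linarith
  have h_reach : a * r + (1 / 2 + a / 2 - b) ≤ r - (1 - 3 * a - 2 * b) / 2 := by linarith
  have h_far {p : ℝ} (hp : |p| ≤ r - (1 - 3 * a - 2 * b) / 2) :
      triangularDensity ((1 - 3 * a - 2 * b) / 2) (p - x) = 0 :=
    triangularDensity_eq_zero (by linarith [abs_sub_abs_le_abs_sub x p, abs_sub_comm x p])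
  rw [larssonKernel, h_far, h_far, h_far]
  · ring
  all_goals
    exact abs_le.2 ⟨by linarith only [h_lower, h_shift, h_reach],
      by linarith only [h_upper, h_shift, h_reach]⟩

end LarssonKernel

theorem kernel_left_eigenfunction_constant_general
    {a b r : ℝ} (ha : 0 ≤ a) (hab : 3 * a + 2 * b < 1) (hr : 1 - a - 2 * b ≤ (1 - a) * r) :
    ∀ y ∈ Set.Icc (-r) r,
      ∫ x in Set.Icc (-r) r, larssonKernel a b (Set.Icc (-r) r) x y = 4 * a := by
  intro y hy
  rw [setIntegral_eq_integral_of_forall_compl_eq_zero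
      fun x hx => larssonKernel_eq_zero_of_notMem_Icc ha hab hr _ hy hx,
    integral_larssonKernel hab, Set.indicator_of_mem hy, mul_one]

/-- With `T(0) = [−1 + c, 1 − c]`, for every `y ∈ T(0)` one has
`∫_{−1+c}^{1−c} m_{T(0)}(x, y) dx = 4a`: the constant function `1` on `T(0)` is an
eigenfunction with eigenvalue `4a` of `h ↦ ∫_{T(0)} h(x) m_{T(0)}(x, ·) dx`. -/
theorem kernel_left_eigenfunction_constant
    (a b : ℝ) (ha : 1 / 4 < a) (hb : 0 < b) (hab : 3 * a + 2 * b < 1)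
    (c : ℝ) (hc : c = 2 * b / (1 - a)) :
    ∀ y ∈ Set.Icc (-1 + c) (1 - c),
      (∫ x in Set.Icc (-1 + c) (1 - c),
          larssonKernel a b (Set.Icc (-1 + c) (1 - c)) x y) = 4 * a := by
  have hr : (1 - a) * (1 - c) = 1 - a - 2 * b := by grind
  rw [show -1 + c = -(1 - c) by ring]
  exact kernel_left_eigenfunction_constant_general (by linarith) hab hr.ge
end
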